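/- arXiv:2012.14812 — 3 statements merged into one kernel-verified Lean document; each statement's English description precedes it below -/
import Mathlib

section
/- Let f : A → B be a K-linear map with f(1)=1 between commutative unital K-algebras, and let a ∈ A be nilpotent such that f(a^m) is nilpotent in B for every m ≥ 1. Then κ(f)_n(a,…,a) = 0 for all sufficiently large n, the element f(exp(a)) − 1 is nilpotent in B, and Σ_{n≥1} (1/n!) κ(f)_n(a,…,a) = log(f(exp(a))), where exp(a) := Σ_{m≥0} a^m/m! and log(1+x) := Σ_{k≥1} (−1)^{k−1} x^k/k (all sums are finite by nilpotency). -/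
open Finset

/-- The set of partitions of `{0,…,n-1}` into nonempty, pairwise disjoint blocks. -/
def partitionsOf (n : ℕ) : Finset (Finset (Finset (Fin n))) :=
  ((Finset.univ : Finset (Fin n)).powerset.powerset).filter fun P =>
    (∀ s ∈ P, s.Nonempty) ∧ (∀ s ∈ P, ∀ t ∈ P, s ≠ t → s ∩ t = ∅) ∧ P.sup id = Finset.univ

/-- The `n`-th cumulant of a map `f` between commutative rings. -/
noncomputable def cumul {R S : Type*} [CommRing R] [CommRing S]
    (f : R → S) (n : ℕ) (a : Fin n → R) : S :=
  ∑ P ∈ partitionsOf n,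
    ((-1 : ℤ) ^ (P.card - 1) * ((P.card - 1).factorial : ℤ)) • ∏ s ∈ P, f (∏ i ∈ s, a i)

/-- Exponential `exp(a) = Σ_{m≥0} a^m/m!` of an element of a `K`-algebra; the sum is
finite whenever `a` is nilpotent. -/
noncomputable def expNil (K : Type*) {A : Type*} [Field K] [CommRing A] [Algebra K A]
    (a : A) : A :=
  ∑ᶠ m : ℕ, ((m.factorial : K)⁻¹) • a ^ m

/-- Logarithm `log(1+x) = Σ_{k≥1} (−1)^{k−1} x^k/k`; the sum is finite whenever `x` is
nilpotent. -/
noncomputable def log1p (K : Type*) {B : Type*} [Field K] [CommRing B] [Algebra K B]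
    (x : B) : B :=
  ∑ᶠ k : ℕ, (((-1 : K) ^ k) / ((k : K) + 1)) • x ^ (k + 1)

/-!
Write `g = f(exp(aX)) - 1 = ∑_{m ≥ 1} f(a^m)/m! X^m`, with `f` acting coefficientwise. By the
exponential formula, `n! [X^n] g^k / k!` is the sum of `∏ f(a^|s|)` over the partitions of an
`n`-element set into `k` blocks `s`. The cumulant weights each such partition by
`(-1)^(k-1) (k-1)!`, so `κ(f)_n(a,…,a)/n!` is the `n`-th coefficient of
`∑_{k ≥ 1} (-1)^(k-1) g^k / k = log(1 + g)`. Since `a` is nilpotent, `g` is a polynomial, and since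
its coefficients are nilpotent, so is `g`. Hence `log(1 + g)` is a polynomial too: its high
coefficients vanish, and evaluating at `X = 1` sums them all to `log(f(exp(a)))`.
-/

section Partitions

variable {α : Type*} [DecidableEq α]

theorem sup_erase_parts {U s : Finset α} (P : Finpartition U) (hs : s ∈ P.parts) :
    (P.parts.erase s).sup id = U \ s := by
  have hdisj : Disjoint ((P.parts.erase s).sup id) s :=
    (P.supIndep (erase_subset s P.parts) hs (notMem_erase s _)).symm
  calc (P.parts.erase s).sup id
      = (s ⊔ (P.parts.erase s).sup id) \ s := hdisj.symm.sup_sdiff_cancel_left.symm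
    _ = (insert s (P.parts.erase s)).sup id \ s := by rw [sup_insert, id]
    _ = U \ s := by rw [insert_erase hs, P.sup_parts]

theorem notMem_parts_sdiff {U s : Finset α} (hs : s.Nonempty) (Q : Finpartition (U \ s)) :
    s ∉ Q.parts := fun hsQ ↦
  hs.ne_empty (disjoint_self.mp (sdiff_disjoint.mono_left (Q.le hsQ)))

theorem sum_finpartition_with_part_eq {M : Type*} [AddCommMonoid M] {U s : Finset α} {x : α}
    (hsU : s ⊆ U) (hxs : x ∈ s) (F : Finset (Finset α) → M) :
    ∑ P : Finpartition U with P.part x = s, F P.parts =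
      ∑ Q : Finpartition (U \ s), F (insert s Q.parts) := by
  have hs : s.Nonempty := ⟨x, hxs⟩
  have hsup : U \ s ⊔ s = U := sdiff_union_of_subset hsU
  symm
  refine sum_bij (fun Q _ ↦ Q.extend hs.ne_empty sdiff_disjoint hsup) ?maps ?inj ?surj
    fun _ _ ↦ rfl
  case maps =>
    intro Q _
    exact mem_filter.mpr ⟨mem_univ _,
      Finpartition.part_eq_of_mem _ (mem_insert_self s Q.parts) hxs⟩
  case inj =>
    intro Q _ Q' _ h
    have hparts : insert s Q.parts = insert s Q'.parts := congrArg Finpartition.parts h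
    ext1
    rw [← erase_insert (notMem_parts_sdiff hs Q), hparts,
      erase_insert (notMem_parts_sdiff hs Q')]
  case surj =>
    intro P hP
    have hsP : s ∈ P.parts := by
      rw [← (mem_filter.mp hP).2, Finpartition.part_mem]
      exact hsU hxs
    refine ⟨P.ofSubset (erase_subset s P.parts) (sup_erase_parts P hsP), mem_univ _, ?_⟩
    ext1
    exact insert_erase hsP

theorem sum_finpartition_eq_sum_part {M : Type*} [AddCommMonoid M] {U : Finset α} {x : α}
    (hx : x ∈ U) (F : Finset (Finset α) → M) :
    ∑ P : Finpartition U, F P.parts =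
      ∑ s ∈ U.powerset with x ∈ s, ∑ Q : Finpartition (U \ s), F (insert s Q.parts) := by
  have hmaps : ∀ P ∈ (univ : Finset (Finpartition U)), P.part x ∈ {s ∈ U.powerset | x ∈ s} :=
    fun P _ ↦ mem_filter.mpr ⟨mem_powerset.mpr (P.part_subset x), P.mem_part_self.mpr hx⟩
  rw [← sum_fiberwise_of_maps_to hmaps]
  refine sum_congr rfl fun s hs ↦ ?_
  rw [mem_filter, mem_powerset] at hs
  exact sum_finpartition_with_part_eq hs.1 hs.2 F

theorem sum_powerset_insert_with_mem_apply_card {M : Type*} [AddCommMonoid M] {T : Finset α}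
    {x : α} (hx : x ∉ T) (φ : ℕ → M) :
    ∑ s ∈ (insert x T).powerset with x ∈ s, φ #s =
      ∑ i ∈ range (#T + 1), (#T).choose i • φ (i + 1) := by
  have hnotMem : ∀ s ∈ T.powerset, x ∉ s := fun s hs hxs ↦ hx (mem_powerset.mp hs hxs)
  rw [sum_filter, sum_powerset_insert hx, sum_eq_zero fun s hs ↦ if_neg (hnotMem s hs), zero_add,
    ← sum_powerset_apply_card fun i ↦ φ (i + 1)]
  refine sum_congr rfl fun s hs ↦ ?_
  rw [if_pos (mem_insert_self x s), card_insert_of_notMem (hnotMem s hs)]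

end Partitions

section PartialBell

open PowerSeries
open scoped Nat

variable {α R : Type*} [DecidableEq α] [CommSemiring R]

/-- The partial exponential Bell polynomial `B_{n,k}(w₁, w₂, …)` with `n = #U`, as the sum over
the partitions of `U` into `k` blocks of the product of the weights of the blocks. -/
def partialBell (w : ℕ → R) (k : ℕ) (U : Finset α) : R :=
  ∑ P : Finpartition U with #P.parts = k, ∏ s ∈ P.parts, w #s

theorem partialBell_zero (w : ℕ → R) (U : Finset α) :
    partialBell w 0 U = if U = ∅ then 1 else 0 := by
  unfold partialBell
  split_ifs with hU
  · subst hU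
    rw [← bot_eq_empty, sum_filter, Fintype.sum_subsingleton _ default,
      Finpartition.default_eq_empty, Finpartition.empty_parts, card_empty, if_pos rfl, prod_empty]
  · refine sum_eq_zero fun P hP ↦ absurd (mem_filter.mp hP).2 ?_
    simpa using hU

theorem partialBell_succ_empty (w : ℕ → R) (k : ℕ) : partialBell w (k + 1) (∅ : Finset α) = 0 :=
  sum_eq_zero fun P hP ↦ by
    have hcard : #P.parts ≤ #(∅ : Finset α) := P.card_parts_le_card
    rw [(mem_filter.mp hP).2, card_empty] at hcard
    omega

theorem partialBell_succ (w : ℕ → R) (k : ℕ) {U : Finset α} {x : α} (hx : x ∈ U) :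
    partialBell w (k + 1) U =
      ∑ s ∈ U.powerset with x ∈ s, w #s * partialBell w k (U \ s) := by
  unfold partialBell
  simp only [sum_filter (fun P : Finpartition _ ↦ #P.parts = _)]
  rw [sum_finpartition_eq_sum_part hx fun p ↦ if #p = k + 1 then ∏ s ∈ p, w #s else 0]
  refine sum_congr rfl fun s hs ↦ ?_
  rw [mul_sum]
  refine sum_congr rfl fun Q _ ↦ ?_
  have hsQ : s ∉ Q.parts := notMem_parts_sdiff ⟨x, (mem_filter.mp hs).2⟩ Q
  simp only [card_insert_of_notMem hsQ, prod_insert hsQ, Nat.add_right_cancel_iff, mul_ite,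
    mul_zero]

theorem succ_mul_coeff_succ_pow_succ (g : R⟦X⟧) (k n : ℕ) :
    ((n + 1 : ℕ) : R) * coeff (n + 1) (g ^ (k + 1)) =
      ((k + 1 : ℕ) : R) * ∑ i ∈ range (n + 1),
        ((i + 1 : ℕ) : R) * coeff (i + 1) g * coeff (n - i) (g ^ k) := by
  have hderiv := congrArg (coeff n) (derivative_pow g (k + 1))
  rw [coeff_derivative, Nat.add_sub_cancel, mul_assoc, mul_comm (g ^ k),
    ← map_natCast (C (R := R)), coeff_C_mul, coeff_mul,
    Nat.sum_antidiagonal_eq_sum_range_succ fun i j ↦ coeff i (d⁄dX R g) * coeff j (g ^ k)] at hderiv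
  simp only [coeff_derivative] at hderiv
  push_cast
  rw [mul_comm, hderiv]
  simp only [Nat.cast_succ, mul_comm (coeff _ g)]

-- Differentiating `g ^ (k + 1)` corresponds to splitting off the block that contains `x`.
theorem factorial_mul_partialBell_insert {w : ℕ → R} {g : R⟦X⟧} {k : ℕ}
    (hw : ∀ j ≠ 0, w j = j ! * coeff j g)
    (hk : ∀ U : Finset α, k ! * partialBell w k U = (#U)! * coeff #U (g ^ k))
    {T : Finset α} {x : α} (hx : x ∉ T) :
    (k + 1)! * partialBell w (k + 1) (insert x T) =
      (#(insert x T))! * coeff #(insert x T) (g ^ (k + 1)) := by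
  let c (m : ℕ) : R := m ! * coeff m g * ((#T + 1 - m)! * coeff (#T + 1 - m) (g ^ k))
  have hblock : ∀ s ∈ {s ∈ (insert x T).powerset | x ∈ s},
      k ! * (w #s * partialBell w k (insert x T \ s)) = c #s := by
    intro s hs
    obtain ⟨hsU, hxs⟩ := mem_filter.mp hs
    rw [mul_left_comm, hk, hw _ (card_ne_zero_of_mem hxs),
      card_sdiff_of_subset (mem_powerset.mp hsU), card_insert_of_notMem hx]
  have hchoose : ∀ i ∈ range (#T + 1), (#T).choose i • c (i + 1) =
      (#T)! * (((i + 1 : ℕ) : R) * coeff (i + 1) g * coeff (#T - i) (g ^ k)) := by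
    intro i hi
    rw [← Nat.choose_mul_factorial_mul_factorial (mem_range_succ_iff.mp hi), nsmul_eq_mul]
    simp only [c, Nat.add_sub_add_right, Nat.factorial_succ]
    push_cast
    ring
  calc ((k + 1)! : R) * partialBell w (k + 1) (insert x T)
      = (k + 1 : ℕ) * ∑ s ∈ (insert x T).powerset with x ∈ s, c #s := by
        rw [partialBell_succ w k (mem_insert_self x T), Nat.factorial_succ, Nat.cast_mul,
          mul_assoc, mul_sum, sum_congr rfl hblock]
    _ = (k + 1 : ℕ) * ((#T)! * ∑ i ∈ range (#T + 1),
          ((i + 1 : ℕ) : R) * coeff (i + 1) g * coeff (#T - i) (g ^ k)) := by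
        rw [sum_powerset_insert_with_mem_apply_card hx, sum_congr rfl hchoose, ← mul_sum]
    _ = (#(insert x T))! * coeff #(insert x T) (g ^ (k + 1)) := by
        rw [card_insert_of_notMem hx, Nat.factorial_succ, Nat.cast_mul,
          mul_comm ((#T + 1 : ℕ) : R), mul_assoc, succ_mul_coeff_succ_pow_succ,
          mul_left_comm]

/-- The exponential formula. -/
theorem factorial_mul_partialBell {w : ℕ → R} {g : R⟦X⟧} (hg : constantCoeff g = 0)
    (hw : ∀ j ≠ 0, w j = j ! * coeff j g) (k : ℕ) (U : Finset α) :
    k ! * partialBell w k U = (#U)! * coeff #U (g ^ k) := by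
  induction k generalizing U with
  | zero =>
    rcases U.eq_empty_or_nonempty with rfl | hU
    · simp [partialBell_zero]
    · simp [partialBell_zero, coeff_one, hU.ne_empty]
  | succ k ih =>
    cases U using Finset.induction_on with
    | empty => simp [partialBell_succ_empty, hg]
    | insert x T hx => exact factorial_mul_partialBell_insert hw ih hx

end PartialBell

section CumulantSeries

open PowerSeries
open scoped Nat

theorem partitionsOf_eq_image_parts (n : ℕ) :
    partitionsOf n =
      (univ : Finset (Finpartition (univ : Finset (Fin n)))).image Finpartition.parts := by
  ext P
  simp only [partitionsOf, mem_filter, mem_image, mem_univ, true_and]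
  constructor
  · rintro ⟨-, hne, hdisj, hsup⟩
    refine ⟨⟨P, ?_, hsup, fun h ↦ not_nonempty_empty (hne _ h)⟩, rfl⟩
    rw [supIndep_iff_pairwiseDisjoint]
    exact fun s hs t ht hst ↦ disjoint_iff_inter_eq_empty.mpr (hdisj s hs t ht hst)
  · rintro ⟨Q, rfl⟩
    refine ⟨by simp, fun s ↦ Q.nonempty_of_mem_parts, ?_, Q.sup_parts⟩
    exact fun s hs t ht hst ↦ disjoint_iff_inter_eq_empty.mp (Q.disjoint hs ht hst)

variable {A B : Type*} [CommRing A] [CommRing B]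

theorem cumul_const (f : A → B) (n : ℕ) (a : A) :
    cumul f n (fun _ ↦ a) = ∑ k ∈ range (n + 1),
      ((-1 : ℤ) ^ (k - 1) * ((k - 1)! : ℤ)) •
        partialBell (fun j ↦ f (a ^ j)) k (univ : Finset (Fin n)) := by
  have hcard : ∀ P ∈ (univ : Finset (Finpartition (univ : Finset (Fin n)))),
      #P.parts ∈ range (n + 1) := fun P _ ↦
    mem_range_succ_iff.mpr (P.card_parts_le_card.trans_eq (card_fin n))
  rw [cumul, partitionsOf_eq_image_parts, sum_image fun _ _ _ _ ↦ Finpartition.ext,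
    ← sum_fiberwise_of_maps_to hcard]
  refine sum_congr rfl fun k _ ↦ ?_
  rw [partialBell, smul_sum]
  refine sum_congr rfl fun P hP ↦ ?_
  simp only [prod_const, (mem_filter.mp hP).2]

theorem coeff_pow_eq_zero_of_lt {R : Type*} [CommSemiring R] {g : R⟦X⟧}
    (hg : constantCoeff g = 0) {n k : ℕ} (hnk : n < k) : coeff n (g ^ k) = 0 :=
  X_pow_dvd_iff.mp (pow_dvd_pow_of_dvd (X_dvd_iff.mpr hg) k) n hnk

variable {K : Type*} [Field K] [CharZero K] [Algebra K B]

theorem partialBell_eq_smul_coeff_pow {α : Type*} [DecidableEq α] {w : ℕ → B} {g : B⟦X⟧}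
    (hg : constantCoeff g = 0) (hw : ∀ j ≠ 0, coeff j g = (j ! : K)⁻¹ • w j) (k : ℕ)
    (U : Finset α) :
    partialBell w k U = ((#U)! / k ! : K) • coeff #U (g ^ k) := by
  have hfac (m : ℕ) : (m ! : K) ≠ 0 := Nat.cast_ne_zero.mpr m.factorial_ne_zero
  have hmul (m : ℕ) (b : B) : (m : B) * b = (m : K) • b := by
    rw [Algebra.smul_def, map_natCast]
  have hformula := factorial_mul_partialBell hg (w := w)
    (fun j hj ↦ by rw [hw j hj, hmul, smul_inv_smul₀ (hfac j)]) k U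
  rw [hmul, hmul] at hformula
  rw [div_eq_inv_mul, mul_smul, ← hformula, inv_smul_smul₀ (hfac k)]

theorem inv_factorial_smul_cumul_const {f : A → B} {a : A} {g : B⟦X⟧}
    (hg : constantCoeff g = 0) (hfg : ∀ j ≠ 0, coeff j g = (j ! : K)⁻¹ • f (a ^ j)) (n : ℕ) :
    ((n + 1)! : K)⁻¹ • cumul f (n + 1) (fun _ ↦ a) =
      ∑ᶠ k : ℕ, ((-1 : K) ^ k / (k + 1)) • coeff (n + 1) (g ^ (k + 1)) := by
  have hfac (m : ℕ) : (m ! : K) ≠ 0 := Nat.cast_ne_zero.mpr m.factorial_ne_zero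
  have hbell := fun k ↦ partialBell_eq_smul_coeff_pow (K := K) (w := fun j ↦ f (a ^ j)) hg hfg k
    (univ : Finset (Fin (n + 1)))
  have hsupport : (Function.support fun k : ℕ ↦
      ((-1 : K) ^ k / (k + 1)) • coeff (n + 1) (g ^ (k + 1))) ⊆ range (n + 1) := by
    refine Function.support_subset_iff'.mpr fun k hk ↦ ?_
    rw [mem_coe, mem_range, not_lt] at hk
    rw [coeff_pow_eq_zero_of_lt hg (by omega), smul_zero]
  rw [finsum_eq_sum_of_support_subset _ hsupport, cumul_const, sum_range_succ', smul_add,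
    smul_sum]
  simp only [hbell, card_univ, Fintype.card_fin, ← Int.cast_smul_eq_zsmul K, smul_smul]
  rw [pow_zero g, coeff_one, if_neg n.succ_ne_zero, smul_zero, add_zero]
  refine sum_congr rfl fun k _ ↦ ?_
  congr 1
  have hk : (k : K) + 1 ≠ 0 := Nat.cast_add_one_ne_zero k
  have hkfac := hfac k
  have hnfac := hfac (n + 1)
  rw [Nat.add_sub_cancel, Nat.factorial_succ k]
  push_cast
  field_simp

end CumulantSeries

section Log1p

variable {K B : Type*} [Field K] [CommRing B] [Algebra K B]

variable (K B) in
theorem log1p_zero : log1p K (0 : B) = 0 := by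
  simp [log1p]

theorem linearMap_log1p {M : Type*} [AddCommGroup M] [Module K M] (φ : B →ₗ[K] M) {x : B}
    (hx : IsNilpotent x) :
    φ (log1p K x) = ∑ᶠ k : ℕ, ((-1 : K) ^ k / (k + 1)) • φ (x ^ (k + 1)) := by
  obtain ⟨N, hN⟩ := hx
  have hsupport : (Function.support fun k : ℕ ↦
      ((-1 : K) ^ k / (k + 1)) • x ^ (k + 1)).Finite := by
    refine (range N).finite_toSet.subset (Function.support_subset_iff'.mpr fun k hk ↦ ?_)
    rw [mem_coe, mem_range, not_lt] at hk
    rw [pow_eq_zero_of_le (by omega) hN, smul_zero]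
  rw [log1p, ← LinearMap.toAddMonoidHom_coe, AddMonoidHom.map_finsum _ hsupport]
  simp only [LinearMap.toAddMonoidHom_coe, map_smul]

theorem map_log1p {C : Type*} [CommRing C] [Algebra K C] (φ : B →ₐ[K] C) {x : B}
    (hx : IsNilpotent x) : φ (log1p K x) = log1p K (φ x) := by
  rw [← AlgHom.toLinearMap_apply, linearMap_log1p _ hx]
  simp only [AlgHom.toLinearMap_apply, map_pow, log1p]

end Log1p

section Polynomial

open Polynomial

section Log1p

variable {K B : Type*} [Field K] [CommRing B] [Algebra K B] {p : B[X]}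

theorem coeff_log1p (hp : IsNilpotent p) (n : ℕ) :
    (log1p K p).coeff n = ∑ᶠ k : ℕ, ((-1 : K) ^ k / (k + 1)) • (p ^ (k + 1)).coeff n :=
  linearMap_log1p ((lcoeff B n).restrictScalars K) hp

theorem eval_log1p (hp : IsNilpotent p) (x : B) : (log1p K p).eval x = log1p K (p.eval x) :=
  map_log1p ((aeval x).restrictScalars K) hp

theorem coeff_zero_log1p (hp : IsNilpotent p) (hp0 : p.coeff 0 = 0) :
    (log1p K p).coeff 0 = 0 := by
  rw [coeff_zero_eq_eval_zero, eval_log1p hp, ← coeff_zero_eq_eval_zero, hp0, log1p_zero]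

end Log1p

theorem eval_one_eq_finsum_coeff {R : Type*} [Semiring R] (p : R[X]) :
    p.eval 1 = ∑ᶠ n, p.coeff n := by
  rw [eval_eq_sum, Polynomial.sum, finsum_eq_sum_of_support_subset _ (s := p.support)]
  · simp only [one_pow, mul_one]
  · exact fun n hn ↦ mem_support_iff.mpr hn

theorem finsum_coeff_succ {R : Type*} [Semiring R] {p : R[X]} (hp : p.coeff 0 = 0) :
    ∑ᶠ n, p.coeff (n + 1) = p.eval 1 := by
  have heval : p.eval 1 = p.divX.eval 1 := by
    conv_lhs => rw [← divX_mul_X_add p, hp, C_0, add_zero, eval_mul_X, mul_one]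
  rw [heval, eval_one_eq_finsum_coeff]
  simp only [coeff_divX]

end Polynomial

section MomentPolynomial

open Polynomial
open scoped Nat

variable {K A B : Type*} [Field K] [CommRing A] [Algebra K A] [CommRing B] [Algebra K B]

/-- The polynomial `f(exp(aX)) - 1 = ∑_{m ≥ 1} f(a^m)/m! X^m` for `f 1 = 1` and nilpotent `a`,
where `f` acts coefficientwise. The omitted terms vanish because `a ^ nilpotencyClass a = 0`;
for `a` not nilpotent `nilpotencyClass a = 0` and the value is the junk `0`. -/
noncomputable def momentPolynomial (f : A →ₗ[K] B) (a : A) : B[X] :=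
  ∑ m ∈ range (nilpotencyClass a), monomial (m + 1) (((m + 1)! : K)⁻¹ • f (a ^ (m + 1)))

theorem coeff_zero_momentPolynomial (f : A →ₗ[K] B) (a : A) :
    (momentPolynomial f a).coeff 0 = 0 := by
  simp [momentPolynomial, coeff_monomial]

theorem coeff_momentPolynomial (f : A →ₗ[K] B) {a : A} (ha : IsNilpotent a) {m : ℕ}
    (hm : m ≠ 0) : (momentPolynomial f a).coeff m = (m ! : K)⁻¹ • f (a ^ m) := by
  obtain ⟨m, rfl⟩ := Nat.exists_eq_succ_of_ne_zero hm
  simp only [momentPolynomial, finsetSum_coeff, coeff_monomial, Nat.succ_eq_add_one,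
    Nat.add_right_cancel_iff, sum_ite_eq']
  refine ite_eq_left_iff.mpr fun hlt ↦ ?_
  rw [mem_range, not_lt] at hlt
  rw [pow_eq_zero_of_le (by omega) (pow_nilpotencyClass ha), map_zero, smul_zero]

theorem isNilpotent_momentPolynomial (f : A →ₗ[K] B) {a : A}
    (hfa : ∀ m : ℕ, 1 ≤ m → IsNilpotent (f (a ^ m))) : IsNilpotent (momentPolynomial f a) :=
  isNilpotent_sum fun m _ ↦
    isNilpotent_monomial_iff.mpr ((hfa (m + 1) (by omega)).smul _)

theorem expNil_eq_one_add_sum {a : A} (ha : IsNilpotent a) :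
    expNil K a = 1 + ∑ m ∈ range (nilpotencyClass a), ((m + 1)! : K)⁻¹ • a ^ (m + 1) := by
  have hsupport : (Function.support fun m : ℕ ↦ (m ! : K)⁻¹ • a ^ m) ⊆
      range (nilpotencyClass a + 1) := by
    refine Function.support_subset_iff'.mpr fun m hm ↦ ?_
    rw [mem_coe, mem_range, not_lt] at hm
    rw [pow_eq_zero_of_le (by omega) (pow_nilpotencyClass ha), smul_zero]
  rw [expNil, finsum_eq_sum_of_support_subset _ hsupport, sum_range_succ', add_comm]
  simp

theorem eval_one_momentPolynomial {f : A →ₗ[K] B} (hf : f 1 = 1) {a : A} (ha : IsNilpotent a) :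
    (momentPolynomial f a).eval 1 = f (expNil K a) - 1 := by
  rw [expNil_eq_one_add_sum ha, map_add, hf, add_sub_cancel_left, momentPolynomial,
    eval_finsetSum, map_sum]
  simp

theorem coeff_succ_log1p_momentPolynomial [CharZero K] (f : A →ₗ[K] B) {a : A}
    (ha : IsNilpotent a) (hg : IsNilpotent (momentPolynomial f a)) (n : ℕ) :
    (log1p K (momentPolynomial f a)).coeff (n + 1) =
      ((n + 1)! : K)⁻¹ • cumul f (n + 1) (fun _ ↦ a) := by
  rw [inv_factorial_smul_cumul_const (g := (momentPolynomial f a : PowerSeries B))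
    (by simp [coeff_zero_momentPolynomial])
    (fun m hm ↦ by rw [Polynomial.coeff_coe, coeff_momentPolynomial f ha hm]),
    coeff_log1p hg]
  simp only [← Polynomial.coe_pow, Polynomial.coeff_coe]

end MomentPolynomial

/-- for a unital linear map `f` and a nilpotent `a` with all `f(a^m)`
nilpotent, the diagonal cumulants eventually vanish, `f(exp(a)) − 1` is nilpotent, and
`Σ_{n≥1} (1/n!) κ(f)_n(a,…,a) = log(f(exp(a)))`. -/
theorem cumulants_exp_log (K A B : Type*) [Field K] [CharZero K]
    [CommRing A] [Algebra K A] [CommRing B] [Algebra K B]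
    (f : A →ₗ[K] B) (hf : f 1 = 1) (a : A) (ha : IsNilpotent a)
    (hfa : ∀ m : ℕ, 1 ≤ m → IsNilpotent (f (a ^ m))) :
    (∃ N : ℕ, ∀ n : ℕ, N ≤ n → cumul (⇑f) n (fun _ => a) = 0) ∧
    IsNilpotent (f (expNil K a) - 1) ∧
    (∑ᶠ n : ℕ, (((n + 1).factorial : K)⁻¹) • cumul (⇑f) (n + 1) (fun _ => a)) =
      log1p K (f (expNil K a) - 1) := by
  have hg : IsNilpotent (momentPolynomial f a) := isNilpotent_momentPolynomial f hfa
  have heval : (momentPolynomial f a).eval 1 = f (expNil K a) - 1 :=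
    eval_one_momentPolynomial hf ha
  have hcumul := coeff_succ_log1p_momentPolynomial f ha hg
  refine ⟨⟨(log1p K (momentPolynomial f a)).natDegree + 1, fun n hn ↦ ?_⟩, ?_, ?_⟩
  · obtain ⟨n, rfl⟩ := Nat.exists_eq_add_of_le' (show 1 ≤ n by omega)
    have hfac : ((n + 1).factorial : K)⁻¹ ≠ 0 :=
      inv_ne_zero (Nat.cast_ne_zero.mpr (Nat.factorial_ne_zero _))
    rw [← smul_eq_zero_iff_right hfac, ← hcumul,
      Polynomial.coeff_eq_zero_of_natDegree_lt (by omega)]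
  · rw [← heval]
    exact hg.map (Polynomial.evalRingHom 1)
  · rw [← finsum_congr hcumul,
      finsum_coeff_succ (coeff_zero_log1p hg (coeff_zero_momentPolynomial f a)), eval_log1p hg,
      heval]
end

section
/- Let (σ,τ,h) be a semifull algebra contraction of (A,d_A) onto (B,d_B). Then for every n ≥ 2 and all x_1,…,x_n ∈ B, the Koszul brackets of d_B satisfy K(d_B)_n(x_1,…,x_n) = Σ σ( K(d_A)_k( κ(τ)_{|I_1|}((x_i)_{i∈I_1}), …, κ(τ)_{|I_k|}((x_i)_{i∈I_k}) ) ), the sum running over all partitions {I_1,…,I_k} of {1,…,n} into k ≥ 2 nonempty blocks. (Hence the L∞ structure given by the Koszul brackets of d_B is obtained by homotopy transfer from the one given by the Koszul brackets of d_A.) -/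
open Finset

/-- The `n`-th Koszul bracket of an operator `D` on a commutative ring. -/
noncomputable def koszul {R : Type*} [CommRing R] (D : R → R) (n : ℕ) (a : Fin n → R) : R :=
  ∑ s ∈ (Finset.univ : Finset (Fin n)).powerset.filter fun s => s.Nonempty,
    (-1 : ℤ) ^ (n - s.card) • (D (∏ i ∈ s, a i) * ∏ i ∈ sᶜ, a i)

/-- Restriction of a family `a` to a finite subset `s` of its index set. -/
noncomputable def restr {α β : Type*} (a : α → β) (s : Finset α) : Fin s.card → β :=
  fun i => a (s.equivFin.symm i).1

/-!
The kernel `C` of `h` is a subring of `A` that contains the image of `τ` and on which `σ` is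
multiplicative. Hence `σ` maps the cumulants of `τ` to the cumulants of the identity of `B`, which
vanish in arity at least two.

Splitting a partition of `{1, …, n}` together with a set of its blocks into a partition of a subset
`V` and one of its complement turns the sum over all partitions into
`∑ V, σ (d_A (E κ V) * E (-κ) Vᶜ)`, where `E F U` is the sum of `∏ I ∈ P, F I` over the
partitions `P` of `U`. By the moment-cumulant formula `E κ V = τ (∏ i ∈ V, x i)`, while
`σ (E (-κ) Vᶜ) = ∏ i ∈ Vᶜ, -x i`, so the sum is the Koszul bracket of `d_B`. The one-block
partition contributes `d_B (σ κ_n) = 0`.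
-/

section SetPartitions

variable {α : Type*} [DecidableEq α]

/-- The partitions of the finite set `U` into nonempty, pairwise disjoint blocks; this extends
`partitionsOf` from `univ : Finset (Fin n)` to arbitrary finite sets. -/
def setPartitions (U : Finset α) : Finset (Finset (Finset α)) :=
  U.powerset.powerset.filter fun P =>
    (∀ s ∈ P, s.Nonempty) ∧ (∀ s ∈ P, ∀ t ∈ P, s ≠ t → s ∩ t = ∅) ∧ P.sup id = U

theorem partitionsOf_eq_setPartitions (n : ℕ) :
    partitionsOf n = setPartitions (univ : Finset (Fin n)) := by
  unfold partitionsOf setPartitions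
  congr

variable {U V : Finset α} {P Q S : Finset (Finset α)} {a : α}

theorem mem_setPartitions : P ∈ setPartitions U ↔
    (∀ s ∈ P, s.Nonempty) ∧ (∀ s ∈ P, ∀ t ∈ P, ∀ i, i ∈ s → i ∈ t → s = t) ∧
      ∀ i, i ∈ U ↔ ∃ s ∈ P, i ∈ s := by
  have sup_eq_iff : P.sup id = U ↔ ∀ i, i ∈ U ↔ ∃ s ∈ P, i ∈ s := by
    simp only [Finset.ext_iff, mem_sup, id, iff_comm]
  simp only [setPartitions, mem_filter, mem_powerset, sup_eq_iff]
  constructor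
  · rintro ⟨-, nonempty, disjoint, cover⟩
    refine ⟨nonempty, fun s hs t ht i his hit => ?_, cover⟩
    by_contra hst
    exact notMem_empty i (disjoint s hs t ht hst ▸ mem_inter.2 ⟨his, hit⟩)
  · rintro ⟨nonempty, disjoint, cover⟩
    exact ⟨fun s hs => mem_powerset.2 fun i hi => (cover i).2 ⟨s, hs, hi⟩, nonempty,
      by grind, cover⟩

@[simp]
theorem setPartitions_empty : setPartitions (∅ : Finset α) = {∅} := by
  ext P
  rw [mem_setPartitions, mem_singleton]
  constructor
  · rintro ⟨nonempty, -, cover⟩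
    refine eq_empty_of_forall_notMem fun s hs => ?_
    obtain ⟨i, hi⟩ := nonempty s hs
    exact notMem_empty i ((cover i).2 ⟨s, hs, hi⟩)
  · rintro rfl
    simp

theorem nonempty_of_mem_setPartitions (hU : U.Nonempty) (hP : P ∈ setPartitions U) :
    P.Nonempty := by
  obtain ⟨a, ha⟩ := hU
  obtain ⟨I, hI, -⟩ := ((mem_setPartitions.1 hP).2.2 a).1 ha
  exact ⟨I, hI⟩

theorem filter_card_eq_one_setPartitions (hU : U.Nonempty) :
    {P ∈ setPartitions U | #P = 1} = {{U}} := by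
  ext P
  rw [mem_filter, card_eq_one, mem_singleton, mem_setPartitions]
  constructor
  · rintro ⟨⟨-, -, cover⟩, I, rfl⟩
    congr 1
    ext i
    simp [cover]
  · rintro rfl
    simp [hU]

theorem exists_filter_mem_eq_singleton (hP : P ∈ setPartitions U) (ha : a ∈ U) :
    ∃ I ∈ P, {J ∈ P | a ∈ J} = {I} := by
  obtain ⟨-, disjoint, cover⟩ := mem_setPartitions.1 hP
  obtain ⟨I, hI, haI⟩ := (cover a).1 ha
  refine ⟨I, hI, ?_⟩
  ext J
  grind

theorem card_filter_notMem_of_mem_setPartitions (hP : P ∈ setPartitions U) (ha : a ∈ U) :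
    #{J ∈ P | a ∉ J} = #P - 1 := by
  obtain ⟨I, -, hI⟩ := exists_filter_mem_eq_singleton hP ha
  have hcard := card_filter_add_card_filter_not (s := P) (a ∈ ·)
  rw [hI, card_singleton] at hcard
  lia

theorem sup_eq_of_mem_setPartitions (hP : P ∈ setPartitions U) : P.sup id = U :=
  (mem_filter.1 hP).2.2.2

theorem mem_setPartitions_sup_of_subset (hP : P ∈ setPartitions U) (hS : S ⊆ P) :
    S ∈ setPartitions (S.sup id) := by
  simp only [mem_setPartitions, mem_sup, id] at hP ⊢
  grind

theorem sdiff_mem_setPartitions (hP : P ∈ setPartitions U) (hS : S ⊆ P) :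
    P \ S ∈ setPartitions (U \ S.sup id) := by
  simp only [mem_setPartitions, mem_sdiff, mem_sup, id] at hP ⊢
  grind

theorem union_mem_setPartitions (hVU : V ⊆ U) (hS : S ∈ setPartitions V)
    (hQ : Q ∈ setPartitions (U \ V)) : S ∪ Q ∈ setPartitions U := by
  simp only [mem_setPartitions, mem_sdiff, mem_union] at hS hQ ⊢
  have disjoint_blocks : ∀ s ∈ S, ∀ t ∈ Q, ∀ i ∈ s, i ∉ t := fun s hs t ht i his hit =>
    ((hQ.2.2 i).2 ⟨t, ht, hit⟩).2 ((hS.2.2 i).2 ⟨s, hs, his⟩)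
  grind

theorem disjoint_of_mem_setPartitions (hS : S ∈ setPartitions V)
    (hQ : Q ∈ setPartitions (U \ V)) : Disjoint S Q := by
  simp only [mem_setPartitions, mem_sdiff] at hS hQ
  refine disjoint_left.2 fun s hsS hsQ => ?_
  obtain ⟨i, hi⟩ := hS.1 s hsS
  exact ((hQ.2.2 i).2 ⟨s, hsQ, hi⟩).2 ((hS.2.2 i).2 ⟨s, hsS, hi⟩)

theorem sum_setPartitions_sum_powerset {M : Type*} [AddCommMonoid M] (U : Finset α)
    (G : Finset (Finset α) → Finset (Finset α) → M) :
    ∑ P ∈ setPartitions U, ∑ S ∈ P.powerset, G S (P \ S) =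
      ∑ V ∈ U.powerset, ∑ S ∈ setPartitions V, ∑ Q ∈ setPartitions (U \ V), G S Q := by
  simp_rw [sum_sigma']
  refine sum_bij' (fun p _ => ⟨p.2.sup id, p.2, p.1 \ p.2⟩) (fun p _ => ⟨p.2.1 ∪ p.2.2, p.2.1⟩)
    ?_ ?_ ?_ ?_ fun _ _ => rfl
  · rintro ⟨P, S⟩ hPS
    obtain ⟨hP, hS⟩ := mem_sigma.1 hPS
    rw [mem_powerset] at hS
    have hSU : S.sup id ⊆ U := sup_eq_of_mem_setPartitions hP ▸ sup_mono hS
    simp only [mem_sigma, mem_powerset]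
    exact ⟨hSU, mem_setPartitions_sup_of_subset hP hS, sdiff_mem_setPartitions hP hS⟩
  · rintro ⟨V, S, Q⟩ hVSQ
    simp only [mem_sigma, mem_powerset] at hVSQ ⊢
    exact ⟨union_mem_setPartitions hVSQ.1 hVSQ.2.1 hVSQ.2.2, subset_union_left⟩
  · rintro ⟨P, S⟩ hPS
    simp [union_sdiff_of_subset (mem_powerset.1 (mem_sigma.1 hPS).2)]
  · rintro ⟨V, S, Q⟩ hVSQ
    simp only [mem_sigma] at hVSQ
    obtain ⟨-, hS, hQ⟩ := hVSQ
    simp [sup_eq_of_mem_setPartitions hS,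
      union_sdiff_cancel_left (disjoint_of_mem_setPartitions hS hQ)]

theorem sum_setPartitions_sum_block {M : Type*} [AddCommMonoid M] (U : Finset α)
    (G : Finset α → Finset (Finset α) → M) :
    ∑ P ∈ setPartitions U, ∑ I ∈ P, G I (P.erase I) =
      ∑ I ∈ U.powerset with I.Nonempty, ∑ Q ∈ setPartitions (U \ I), G I Q := by
  have h := sum_setPartitions_sum_powerset U fun S Q => if #S = 1 then G (S.sup id) Q else 0
  have sum_blocks (P : Finset (Finset α)) :
      ∑ S ∈ P.powerset, (if #S = 1 then G (S.sup id) (P \ S) else 0) =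
        ∑ I ∈ P, G I (P.erase I) := by
    rw [← sum_filter, ← powersetCard_eq_filter, powersetCard_one, sum_map]
    simp [sdiff_singleton_eq_erase]
  have sum_one_block (V : Finset α) : ∑ S ∈ setPartitions V, ∑ Q ∈ setPartitions (U \ V),
      (if #S = 1 then G (S.sup id) Q else 0) =
        if V.Nonempty then ∑ Q ∈ setPartitions (U \ V), G V Q else 0 := by
    rw [sum_comm]
    simp_rw [← sum_filter]
    split_ifs with hV
    · simp [filter_card_eq_one_setPartitions hV]
    · simp [not_nonempty_iff_eq_empty.1 hV, filter_singleton]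
  simp only [sum_blocks, sum_one_block] at h
  rw [h, sum_filter]

theorem sum_setPartitions_eq_add_sum_two_le_card {M : Type*} [AddCommMonoid M]
    (hU : U.Nonempty) (f : Finset (Finset α) → M) :
    ∑ P ∈ setPartitions U, f P = f {U} + ∑ P ∈ setPartitions U with 2 ≤ #P, f P := by
  have one_block : {P ∈ setPartitions U | ¬ 2 ≤ #P} = {{U}} := by
    rw [← filter_card_eq_one_setPartitions hU]
    refine filter_congr fun P hP => ?_
    have := (nonempty_of_mem_setPartitions hU hP).card_pos
    lia
  rw [← sum_filter_add_sum_filter_not (setPartitions U) (2 ≤ #·), one_block, sum_singleton,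
    add_comm]

variable {β : Type*} [DecidableEq β]

theorem map_mem_setPartitions_map (f : α ↪ β) :
    Q.map (mapEmbedding f).toEmbedding ∈ setPartitions (U.map f) ↔ Q ∈ setPartitions U := by
  simp only [mem_setPartitions, forall_mem_map, RelEmbedding.coe_toEmbedding, mapEmbedding_apply,
    map_nonempty, map_inj, mem_map' f]
  refine and_congr_right' (and_congr_right' ?_)
  constructor
  · intro cover i
    simpa using cover (f i)
  · intro cover b
    simp only [mem_map, cover, mapEmbedding_apply, RelEmbedding.coe_toEmbedding]
    grind

theorem setPartitions_map (f : α ↪ β) (U : Finset α) :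
    setPartitions (U.map f) =
      (setPartitions U).map (mapEmbedding (mapEmbedding f).toEmbedding).toEmbedding := by
  ext P
  simp only [mem_map, RelEmbedding.coe_toEmbedding, mapEmbedding_apply]
  constructor
  · intro hP
    have blocks_subset : P ⊆ U.powerset.map (mapEmbedding f).toEmbedding := fun s hs => by
      obtain ⟨t, ht, rfl⟩ := subset_map_iff.1 (sup_eq_of_mem_setPartitions hP ▸ le_sup (f := id) hs)
      exact mem_map_of_mem _ (mem_powerset.2 ht)
    obtain ⟨Q, -, rfl⟩ := subset_map_iff.1 blocks_subset
    exact ⟨Q, (map_mem_setPartitions_map f).1 hP, rfl⟩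
  · rintro ⟨Q, hQ, rfl⟩
    exact (map_mem_setPartitions_map f).2 hQ

end SetPartitions

section Cumulants

variable {α : Type*} [DecidableEq α] {R S : Type*} [CommRing R] [CommRing S]
  {U : Finset α} {a : α}

/-- The exponential of a set function `F`: it turns the cumulants of a system of moments back into
the moments. -/
def partitionSum (F : Finset α → R) (U : Finset α) : R :=
  ∑ P ∈ setPartitions U, ∏ I ∈ P, F I

/-- The Möbius coefficient `(-1)^(k-1) (k-1)!` of a partition into `k` blocks, with the junk value
`1` at `k = 0`. -/
def cumulantCoeff (k : ℕ) : ℤ :=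
  (-1) ^ (k - 1) * (k - 1).factorial

/-- The cumulant on `U` of a system of moments `m`, the logarithm inverse to `partitionSum`.
The cumulants `cumul f` are those of the moments `I ↦ f (∏ i ∈ I, x i)`. -/
def setCumulant (m : Finset α → R) (U : Finset α) : R :=
  ∑ P ∈ setPartitions U, cumulantCoeff #P • ∏ I ∈ P, m I

@[simp]
theorem partitionSum_empty (F : Finset α → R) : partitionSum F ∅ = 1 := by
  simp [partitionSum]

theorem map_partitionSum (f : R →+* S) (F : Finset α → R) (U : Finset α) :
    f (partitionSum F U) = partitionSum (fun I => f (F I)) U := by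
  simp only [partitionSum, map_sum, map_prod]

theorem map_setCumulant (f : R →+* S) (m : Finset α → R) (U : Finset α) :
    f (setCumulant m U) = setCumulant (fun I => f (m I)) U := by
  simp only [setCumulant, map_sum, map_zsmul, map_prod]

theorem partitionSum_eq_sum_mul (F : Finset α → R) (ha : a ∈ U) :
    partitionSum F U = ∑ I ∈ U.powerset with a ∈ I, F I * partitionSum F (U \ I) := by
  have mark_block (P : Finset (Finset α)) (hP : P ∈ setPartitions U) :
      ∏ I ∈ P, F I = ∑ I ∈ P, if a ∈ I then F I * ∏ J ∈ P.erase I, F J else 0 := by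
    obtain ⟨I, hI, hfilter⟩ := exists_filter_mem_eq_singleton hP ha
    rw [← sum_filter, hfilter, sum_singleton, mul_prod_erase _ _ hI]
  rw [partitionSum, sum_congr rfl mark_block,
    sum_setPartitions_sum_block U fun I Q => if a ∈ I then F I * ∏ J ∈ Q, F J else 0,
    sum_filter, sum_filter]
  refine sum_congr rfl fun I _ => ?_
  by_cases haI : a ∈ I
  · simp [haI, show I.Nonempty from ⟨a, haI⟩, partitionSum, mul_sum]
  · simp [haI]

theorem cumulantCoeff_add_mul_cumulantCoeff {k : ℕ} (hk : 0 < k) :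
    cumulantCoeff k + (k - 1 : ℕ) * cumulantCoeff (k - 1) = if k = 1 then 1 else 0 := by
  obtain _ | _ | j := k
  · contradiction
  · simp [cumulantCoeff]
  · simp only [cumulantCoeff, Nat.add_sub_cancel, Nat.factorial_succ, pow_succ]
    rw [if_neg (by lia)]
    push_cast
    ring

theorem setCumulant_add_sum_mul (m : Finset α → R) (ha : a ∈ U) :
    setCumulant m U + ∑ J ∈ U.powerset with J.Nonempty,
      (if a ∉ J then m J * setCumulant m (U \ J) else 0) = m U := by
  have mark_block (P : Finset (Finset α)) (hP : P ∈ setPartitions U) :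
      (∑ J ∈ P, if a ∉ J then m J * (cumulantCoeff #(P.erase J) • ∏ I ∈ P.erase J, m I) else 0) =
        ((#P - 1 : ℕ) * cumulantCoeff (#P - 1)) • ∏ I ∈ P, m I := by
    have term_eq : ∀ J ∈ ({J ∈ P | a ∉ J} : Finset (Finset α)),
        m J * (cumulantCoeff #(P.erase J) • ∏ I ∈ P.erase J, m I) =
          cumulantCoeff (#P - 1) • ∏ I ∈ P, m I := fun J hJ => by
      have hJP := (mem_filter.1 hJ).1
      rw [card_erase_of_mem hJP, mul_smul_comm, mul_prod_erase _ _ hJP]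
    rw [← sum_filter, sum_congr rfl term_eq, sum_const,
      card_filter_notMem_of_mem_setPartitions hP ha, mul_smul, natCast_zsmul]
  have coeff_eq (P : Finset (Finset α)) (hP : P ∈ setPartitions U) :
      cumulantCoeff #P + (#P - 1 : ℕ) * cumulantCoeff (#P - 1) = if #P = 1 then 1 else 0 :=
    cumulantCoeff_add_mul_cumulantCoeff (nonempty_of_mem_setPartitions ⟨a, ha⟩ hP).card_pos
  calc
    _ = setCumulant m U + ∑ P ∈ setPartitions U, ∑ J ∈ P,
          if a ∉ J then m J * (cumulantCoeff #(P.erase J) • ∏ I ∈ P.erase J, m I) else 0 := by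
      rw [sum_setPartitions_sum_block U fun J Q =>
        if a ∉ J then m J * (cumulantCoeff #Q • ∏ I ∈ Q, m I) else 0]
      congr! 2 with J
      split_ifs <;> simp [setCumulant, mul_sum]
    _ = ∑ P ∈ setPartitions U, (if #P = 1 then 1 else 0 : ℤ) • ∏ I ∈ P, m I := by
      rw [setCumulant, sum_congr rfl mark_block, ← sum_add_distrib]
      refine sum_congr rfl fun P hP => ?_
      rw [← add_smul, coeff_eq P hP]
    _ = m U := by
      simp only [ite_smul, one_smul, zero_smul, ← sum_filter]
      rw [filter_card_eq_one_setPartitions ⟨a, ha⟩, sum_singleton, prod_singleton]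

theorem moment_eq_sum_setCumulant_mul (m : Finset α → R) (hm : m ∅ = 1) (ha : a ∈ U) :
    m U = ∑ I ∈ U.powerset with a ∈ I, setCumulant m I * m (U \ I) := by
  have complement : ∑ I ∈ U.powerset with a ∈ I, setCumulant m I * m (U \ I) =
      ∑ J ∈ U.powerset with a ∉ J, m J * setCumulant m (U \ J) := by
    refine sum_nbij' (U \ ·) (U \ ·) ?_ ?_ ?_ ?_ ?_ <;>
      simp +contextual [ha, mul_comm]
  have filter_not_nonempty : {J ∈ U.powerset | ¬ J.Nonempty} = {∅} := by
    ext J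
    simp +contextual [not_nonempty_iff_eq_empty]
  rw [complement, sum_filter, ← sum_filter_not_add_sum_filter U.powerset (·.Nonempty),
    filter_not_nonempty, sum_singleton]
  simpa [hm] using (setCumulant_add_sum_mul m ha).symm

theorem partitionSum_setCumulant (m : Finset α → R) (hm : m ∅ = 1) (U : Finset α) :
    partitionSum (setCumulant m) U = m U := by
  induction U using Finset.strongInduction with
  | H U ih =>
    obtain rfl | ⟨a, ha⟩ := U.eq_empty_or_nonempty
    · rw [partitionSum_empty, hm]
    · rw [partitionSum_eq_sum_mul _ ha, moment_eq_sum_setCumulant_mul m hm ha]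
      refine sum_congr rfl fun I hI => ?_
      obtain ⟨hIU, haI⟩ := mem_filter.1 hI
      rw [ih (U \ I) (sdiff_ssubset (mem_powerset.1 hIU) ⟨a, haI⟩)]

theorem eq_of_partitionSum_eq {F G : Finset α → R} (hFG : partitionSum F = partitionSum G)
    (hU : U.Nonempty) : F U = G U := by
  induction U using Finset.strongInduction with
  | H U ih =>
    obtain ⟨a, ha⟩ := hU
    have recursion := congrFun hFG U
    have hmem : U ∈ ({I ∈ U.powerset | a ∈ I} : Finset (Finset α)) := by simp [ha]
    rw [partitionSum_eq_sum_mul F ha, partitionSum_eq_sum_mul G ha, ← add_sum_erase _ _ hmem,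
      ← add_sum_erase _ _ hmem, sdiff_self, bot_eq_empty, partitionSum_empty, partitionSum_empty,
      mul_one, mul_one, hFG] at recursion
    refine add_right_cancel (recursion.trans (congrArg _ (sum_congr rfl fun I hI => ?_)))
    simp only [mem_erase, mem_filter, mem_powerset] at hI
    rw [ih I (hI.2.1.ssubset_of_ne hI.1) ⟨a, hI.2.2⟩]

theorem partitionSum_eq_prod_singleton {F : Finset α → R} (hF : ∀ I, 2 ≤ #I → F I = 0)
    (U : Finset α) : partitionSum F U = ∏ i ∈ U, F {i} := by
  induction U using Finset.induction_on with
  | empty => simp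
  | insert a U ha ih =>
    rw [partitionSum_eq_sum_mul F (mem_insert_self a U), sum_eq_single_of_mem {a} (by simp),
      prod_insert ha, sdiff_singleton_eq_erase, erase_insert ha, ih]
    intro I hI hIa
    have hcard : 2 ≤ #I := by
      have haI : a ∈ I := (mem_filter.1 hI).2
      have hnontrivial : I.Nontrivial := nontrivial_iff_ne_singleton haI |>.2 hIa
      exact one_lt_card_iff_nontrivial.2 hnontrivial
    rw [hF I hcard, zero_mul]

theorem setCumulant_prod (x : α → R) (hU : U.Nonempty) :
    setCumulant (fun I => ∏ i ∈ I, x i) U = if #U = 1 then ∏ i ∈ U, x i else 0 := by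
  refine eq_of_partitionSum_eq
    (G := fun U => if #U = 1 then ∏ i ∈ U, x i else 0) (funext fun V => ?_) hU
  rw [partitionSum_setCumulant _ prod_empty, partitionSum_eq_prod_singleton]
  · simp
  · intro I hI
    exact if_neg (by lia)

theorem partitionSum_neg_setCumulant_prod (x : α → R) (U : Finset α) :
    partitionSum (fun I => -setCumulant (fun J => ∏ i ∈ J, x i) I) U = ∏ i ∈ U, -x i := by
  rw [partitionSum_eq_prod_singleton]
  · simp [setCumulant_prod x (singleton_nonempty _)]
  · intro I hI
    rw [setCumulant_prod x (card_pos.1 (by lia)), if_neg (by lia), neg_zero]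

end Cumulants

section Koszul

variable {ι R : Type*} [DecidableEq ι] [CommRing R]

/-- The Koszul bracket of the elements `a i`, `i ∈ s`, with the signs absorbed into the second
product. The term of the empty subset is kept: it vanishes when `D 1 = 0`. -/
def koszulOn (D : R → R) (a : ι → R) (s : Finset ι) : R :=
  ∑ V ∈ s.powerset, D (∏ i ∈ V, a i) * ∏ i ∈ s \ V, -a i

theorem koszul_eq_koszulOn {D : R → R} (hD : D 1 = 0) (n : ℕ) (a : Fin n → R) :
    koszul D n a = koszulOn D a univ := by
  rw [koszul, koszulOn, sum_filter]
  refine sum_congr rfl fun V _ => ?_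
  split_ifs with hV
  · rw [← compl_eq_univ_sdiff, prod_neg, card_compl, Fintype.card_fin, zsmul_eq_mul]
    push_cast
    ring
  · simp [not_nonempty_iff_eq_empty.1 hV, hD]

theorem koszulOn_map {κ : Type*} [DecidableEq κ] (D : R → R) (a : κ → R) (f : ι ↪ κ)
    (s : Finset ι) : koszulOn D a (s.map f) = koszulOn D (a ∘ f) s := by
  rw [koszulOn, map_eq_image, powerset_image, sum_image (image_injective f.injective).injOn]
  simp only [← map_eq_image, ← Finset.map_sdiff, prod_map]
  rfl

theorem koszulOn_singleton {D : R → R} (hD : D 1 = 0) (a : ι → R) (i : ι) :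
    koszulOn D a {i} = D (a i) := by
  have powerset_eq : ({i} : Finset ι).powerset = {∅, {i}} := by
    ext V
    simp [subset_singleton_iff]
  rw [koszulOn, powerset_eq, sum_pair (singleton_ne_empty i).symm]
  simp [hD]

theorem sum_setPartitions_koszulOn (D : R →+ R) (F : Finset ι → R) (U : Finset ι) :
    ∑ P ∈ setPartitions U, koszulOn D F P =
      ∑ V ∈ U.powerset, D (partitionSum F V) * partitionSum (fun I => -F I) (U \ V) := by
  simp only [koszulOn]
  rw [sum_setPartitions_sum_powerset U fun S Q => D (∏ I ∈ S, F I) * ∏ I ∈ Q, -F I]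
  simp only [partitionSum, map_sum, sum_mul_sum]

end Koszul

section Restriction

variable {α : Type*}

/-- The enumeration of a finite set along which `restr` reindexes a family. -/
noncomputable def finEnumeration (s : Finset α) : Fin #s ↪ α :=
  s.equivFin.symm.toEmbedding.trans (.subtype _)

theorem univ_map_finEnumeration (s : Finset α) : univ.map (finEnumeration s) = s := by
  rw [finEnumeration, ← map_map, map_univ_equiv, univ_eq_attach, attach_map_val]

variable [DecidableEq α] {R S : Type*} [CommRing R] [CommRing S]

theorem koszul_restr {D : R → R} (hD : D 1 = 0) (a : α → R) (s : Finset α) :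
    koszul D #s (restr a s) = koszulOn D a s := by
  conv_rhs => rw [← univ_map_finEnumeration s, koszulOn_map]
  exact koszul_eq_koszulOn hD _ _

theorem setCumulant_map {β : Type*} [DecidableEq β] (f : α ↪ β) (m : Finset β → R)
    (U : Finset α) : setCumulant m (U.map f) = setCumulant (fun I => m (I.map f)) U := by
  simp [setCumulant, setPartitions_map]

theorem cumul_restr (f : R → S) (x : α → R) (s : Finset α) :
    cumul f #s (restr x s) = setCumulant (fun I => f (∏ i ∈ I, x i)) s := by
  conv_rhs => rw [← univ_map_finEnumeration s, setCumulant_map]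
  simp only [cumul, setCumulant, cumulantCoeff, partitionsOf_eq_setPartitions, prod_map]
  rfl

end Restriction

section Transfer

variable {A B : Type*} [CommRing A] [CommRing B]

section Subring

variable {α : Type*} [DecidableEq α] {C : Subring A} {dA : A →+ A} {dB : B → B} {σ : A →+ B}
  {p : C →+* B} {t : B → C}

theorem sum_setPartitions_map_koszulOn_setCumulant (hσp : ∀ c : C, σ c = p c)
    (hpt : ∀ y, p (t y) = y) (ht1 : t 1 = 1) (hdt : ∀ y, dA (t y) = t (dB y)) (x : α → B)
    (U : Finset α) :
    ∑ P ∈ setPartitions U, σ (koszulOn dA (setCumulant fun I => (t (∏ i ∈ I, x i) : A)) P) =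
      koszulOn dB x U := by
  set κ : Finset α → C := setCumulant fun I => t (∏ i ∈ I, x i) with hκ
  have coe_κ : (setCumulant fun I => (t (∏ i ∈ I, x i) : A)) = fun I => (κ I : A) :=
    funext fun I => (map_setCumulant C.subtype _ I).symm
  have moments (V : Finset α) : partitionSum (fun I => (κ I : A)) V = t (∏ i ∈ V, x i) := by
    rw [← partitionSum_setCumulant (fun I => t (∏ i ∈ I, x i)) (by simpa using ht1) V]
    exact (map_partitionSum C.subtype κ V).symm
  have coe_neg (W : Finset α) :
      partitionSum (fun I => -(κ I : A)) W = (partitionSum (fun I => -κ I) W : C) :=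
    (map_partitionSum C.subtype (fun I => -κ I) W).symm
  have map_neg_κ (W : Finset α) : p (partitionSum (fun I => -κ I) W) = ∏ i ∈ W, -x i := by
    simp only [map_partitionSum, map_neg, hκ, map_setCumulant, hpt,
      partitionSum_neg_setCumulant_prod]
  rw [← map_sum, coe_κ, sum_setPartitions_koszulOn, map_sum, koszulOn]
  refine sum_congr rfl fun V _ => ?_
  rw [moments, hdt, coe_neg, ← C.coe_mul, hσp, map_mul, hpt, map_neg_κ]

theorem map_koszulOn_setCumulant_singleton (hpt : ∀ y, p (t y) = y) (hdA1 : dA 1 = 0)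
    (hσd : ∀ c : C, σ (dA c) = dB (p c)) (x : α → B) {U : Finset α} (hU : 2 ≤ #U) :
    σ (koszulOn dA (setCumulant fun I => (t (∏ i ∈ I, x i) : A)) {U}) = 0 := by
  have hdB0 : dB 0 = 0 := by simpa using (hσd 0).symm
  have coe_κ : setCumulant (fun I => (t (∏ i ∈ I, x i) : A)) U =
      (setCumulant (fun I => t (∏ i ∈ I, x i)) U : C) :=
    (map_setCumulant C.subtype _ U).symm
  rw [koszulOn_singleton hdA1, coe_κ, hσd, map_setCumulant]
  simp only [hpt]
  rw [setCumulant_prod x (card_pos.1 (by lia)), if_neg (by lia), hdB0]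

theorem koszulOn_eq_sum_map_koszulOn_setCumulant (hσp : ∀ c : C, σ c = p c)
    (hpt : ∀ y, p (t y) = y) (ht1 : t 1 = 1) (hdA1 : dA 1 = 0) (hdt : ∀ y, dA (t y) = t (dB y))
    (hσd : ∀ c : C, σ (dA c) = dB (p c)) (x : α → B) {U : Finset α} (hU : 2 ≤ #U) :
    koszulOn dB x U = ∑ P ∈ setPartitions U with 2 ≤ #P,
      σ (koszulOn dA (setCumulant fun I => (t (∏ i ∈ I, x i) : A)) P) := by
  rw [← sum_setPartitions_map_koszulOn_setCumulant hσp hpt ht1 hdt,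
    sum_setPartitions_eq_add_sum_two_le_card (card_pos.1 (by lia)),
    map_koszulOn_setCumulant_singleton hpt hdA1 hσd x hU, zero_add]

end Subring

/-- A semifull algebra contraction of `(A, dA)` onto `(B, dB)` in which `dA` and `dB` need not
square to zero, `h` need not satisfy `σ h = 0` and `h h = 0`, and the maps are only additive. -/
structure WeakSemifullContraction (dA : A →+ A) (dB : B →+ B) (σ : A →+ B) (τ : B →+ A)
    (h : A →+ A) : Prop where
  map_differential (a : A) : σ (dA a) = dB (σ a)
  section_differential (x : B) : τ (dB x) = dA (τ x)
  map_section (x : B) : σ (τ x) = x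
  homotopy (a : A) : h (dA a) + dA (h a) = τ (σ a) - a
  homotopy_section (x : B) : h (τ x) = 0
  differential_one : dA 1 = 0
  homotopy_mul (a b : A) : h (h a * h b) = 0
  homotopy_mul_section (a : A) (x : B) : h (h a * τ x) = 0
  homotopy_section_mul (x y : B) : h (τ x * τ y) = 0
  homotopy_one : h 1 = 0
  map_homotopy_mul (a b : A) : σ (h a * h b) = 0
  map_homotopy_mul_section (a : A) (x : B) : σ (h a * τ x) = 0
  map_section_mul (x y : B) : σ (τ x * τ y) = x * y
  map_one : σ 1 = 1

namespace WeakSemifullContraction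

variable {dA : A →+ A} {dB : B →+ B} {σ : A →+ B} {τ : B →+ A} {h : A →+ A}

theorem section_one (c : WeakSemifullContraction dA dB σ τ h) : τ 1 = 1 := by
  have hone := c.homotopy 1
  rw [c.differential_one, c.homotopy_one, c.map_one, map_zero, map_zero, add_zero] at hone
  exact sub_eq_zero.1 hone.symm

theorem eq_section_sub_homotopy (c : WeakSemifullContraction dA dB σ τ h) {a : A} (ha : h a = 0) :
    a = τ (σ a) - h (dA a) := by
  have hhtp := c.homotopy a
  rw [ha, map_zero, add_zero] at hhtp
  rw [hhtp, sub_sub_cancel]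

theorem mul_eq_of_mem_ker (c : WeakSemifullContraction dA dB σ τ h) {a b : A} (ha : h a = 0)
    (hb : h b = 0) : a * b = τ (σ a) * τ (σ b) - h (dA b) * τ (σ a) - h (dA a) * τ (σ b) +
      h (dA a) * h (dA b) := by
  conv_lhs => rw [c.eq_section_sub_homotopy ha, c.eq_section_sub_homotopy hb]
  ring

theorem homotopy_mul_eq_zero (c : WeakSemifullContraction dA dB σ τ h) {a b : A} (ha : h a = 0)
    (hb : h b = 0) : h (a * b) = 0 := by
  simp [c.mul_eq_of_mem_ker ha hb, c.homotopy_mul, c.homotopy_mul_section, c.homotopy_section_mul]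

theorem map_mul_of_mem_ker (c : WeakSemifullContraction dA dB σ τ h) {a b : A} (ha : h a = 0)
    (hb : h b = 0) : σ (a * b) = σ a * σ b := by
  simp [c.mul_eq_of_mem_ker ha hb, c.map_homotopy_mul, c.map_homotopy_mul_section,
    c.map_section_mul]

/-- The kernel of the homotopy, as a subring of `A`. -/
def kerSubring (c : WeakSemifullContraction dA dB σ τ h) : Subring A :=
  { h.ker with
    mul_mem' := c.homotopy_mul_eq_zero
    one_mem' := c.homotopy_one }

/-- The projection `σ` on the kernel of the homotopy, where it is a ring homomorphism. -/
def kerProjection (c : WeakSemifullContraction dA dB σ τ h) : c.kerSubring →+* B where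
  toFun a := σ a
  map_one' := c.map_one
  map_mul' a b := c.map_mul_of_mem_ker a.2 b.2
  map_zero' := map_zero σ
  map_add' a b := map_add σ (a : A) b

end WeakSemifullContraction

theorem semifull_transfer_koszul_general {dA : A →+ A} {dB : B →+ B} {σ : A →+ B} {τ : B →+ A}
    {h : A →+ A} (c : WeakSemifullContraction dA dB σ τ h) (n : ℕ) (hn : 2 ≤ n) (x : Fin n → B) :
    koszul dB n x = ∑ P ∈ partitionsOf n with 2 ≤ #P,
      σ (koszul dA #P fun j => cumul τ #(P.equivFin.symm j).1 (restr x (P.equivFin.symm j).1)) := by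
  have hdB1 : dB 1 = 0 := by
    rw [← c.map_one, ← c.map_differential, c.differential_one, map_zero]
  have bracket_eq (P : Finset (Finset (Fin n))) :
      koszul dA #P (fun j => cumul τ #(P.equivFin.symm j).1 (restr x (P.equivFin.symm j).1)) =
        koszulOn dA (setCumulant fun I => τ (∏ i ∈ I, x i)) P := by
    rw [← koszul_restr c.differential_one]
    exact congrArg (koszul dA #P) (funext fun j => cumul_restr τ x _)
  simp only [bracket_eq]
  rw [koszul_eq_koszulOn hdB1, partitionsOf_eq_setPartitions]
  exact koszulOn_eq_sum_map_koszulOn_setCumulant (p := c.kerProjection)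
    (t := fun y => ⟨τ y, c.homotopy_section y⟩) (fun _ => rfl) c.map_section
    (Subtype.ext c.section_one) c.differential_one (fun y => (c.section_differential y).symm)
    (fun a => c.map_differential a) x (by simpa using hn)

end Transfer

/-- for a semifull algebra contraction `(σ,τ,h)` of `(A,d_A)` onto `(B,d_B)`,
the Koszul brackets of `d_B` satisfy, for `n ≥ 2`:
`K(d_B)_n(x_1,…,x_n) = Σ_{partitions into k ≥ 2 blocks} σ(K(d_A)_k(κ(τ)_{|I_1|}(…),…,κ(τ)_{|I_k|}(…)))`. -/
theorem semifull_transfer_koszul (K A B : Type*) [Field K] [CharZero K]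
    [CommRing A] [Algebra K A] [CommRing B] [Algebra K B]
    (dA : A →ₗ[K] A) (dB : B →ₗ[K] B) (σ : A →ₗ[K] B) (τ : B →ₗ[K] A) (h : A →ₗ[K] A)
    (hdA2 : ∀ a, dA (dA a) = 0) (hdB2 : ∀ x, dB (dB x) = 0)
    (hσd : ∀ a, σ (dA a) = dB (σ a)) (hτd : ∀ x, τ (dB x) = dA (τ x))
    (hστ : ∀ x, σ (τ x) = x)
    (hhtp : ∀ a, h (dA a) + dA (h a) = τ (σ a) - a)
    (hσh : ∀ a, σ (h a) = 0) (hhτ : ∀ x, h (τ x) = 0) (hhh : ∀ a, h (h a) = 0)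
    (hdA1 : dA 1 = 0) (hdB1 : dB 1 = 0)
    (s1 : ∀ a b : A, h (h a * h b) = 0) (s2 : ∀ (a : A) (x : B), h (h a * τ x) = 0)
    (s3 : ∀ x y : B, h (τ x * τ y) = 0) (s4 : h 1 = 0)
    (s5 : ∀ a b : A, σ (h a * h b) = 0) (s6 : ∀ (a : A) (x : B), σ (h a * τ x) = 0)
    (s7 : ∀ x y : B, σ (τ x * τ y) = x * y) (s8 : σ 1 = 1) :
    ∀ (n : ℕ), 2 ≤ n → ∀ x : Fin n → B,
      koszul (⇑dB) n x =
        ∑ P ∈ (partitionsOf n).filter fun P => 2 ≤ P.card,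
          σ (koszul (⇑dA) P.card fun j =>
            cumul (⇑τ) ((P.equivFin.symm j).1.card) (restr x (P.equivFin.symm j).1)) :=
  semifull_transfer_koszul_general (dA := dA.toAddMonoidHom) (dB := dB.toAddMonoidHom)
    (σ := σ.toAddMonoidHom) (τ := τ.toAddMonoidHom) (h := h.toAddMonoidHom)
    ⟨hσd, hτd, hστ, hhtp, hhτ, hdA1, s1, s2, s3, s4, s5, s6, s7, s8⟩
end

section
/- Let (Δ_n)_{n≥0} and (Δ′_n)_{n≥0} be sequences of K-linear endomorphisms of a commutative unital K-algebra A with Δ_n(1)=Δ′_n(1)=0 and with K(Δ_n)_{n+2} = 0 and K(Δ′_n)_{n+2} = 0 identically for every n ≥ 0 (i.e. Δ_n and Δ′_n are differential operators of order ≤ n+1). For m ≥ 0 set C_m := Σ_{j=0}^{m} (Δ_j∘Δ′_{m−j} − Δ′_j∘Δ_{m−j}). Then for every n ≥ 1 and all a_1,…,a_n ∈ A: K(C_{n−1})_n(a_1,…,a_n) = Σ_{i=1}^{n} Σ_{S⊆{1,…,n},|S|=i} [ K(Δ_{n−i})_{n−i+1}(K(Δ′_{i−1})_i((a_s)_{s∈S}),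 (a_j)_{j∉S}) − K(Δ′_{n−i})_{n−i+1}(K(Δ_{i−1})_i((a_s)_{s∈S}), (a_j)_{j∉S}) ]. (This is the Taylor-coefficient form of the statement that Δ ↦ P(Δ) is a morphism of Lie algebras from BV operators to coderivations with multiderivation Taylor coefficients.) -/
open Finset

/-!
`K(D)_n(a₁, …, aₙ)` is the iterated commutator of `D` with the multiplications by `a₁, …, aₙ`,
evaluated at `1`. Commutation with a multiplication is a derivation of the composition product, so
`K(D ∘ D')_n` is a sum over `S ⊆ {1, …, n}` of the iterated commutator of `D` along `Sᶜ` applied to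
`K(D')(a_S)`. This differs from the bracket `K(D)(K(D')(a_S), a_{Sᶜ})` by the product
`K(D')(a_S) * K(D)(a_{Sᶜ})`. If `D` and `D'` have orders at most `j + 1` and `n - j`, the bracket
vanishes unless `|S| = n - j`. The products are symmetric under exchanging the two sequences of
operators together with `S` and `Sᶜ`, so they cancel in the commutator.
-/

lemma sum_mul_compl_comm {α R : Type*} [BooleanAlgebra α] [Fintype α]
    [NonUnitalNonAssocCommSemiring R] (f g : α → R) :
    ∑ x, f x * g xᶜ = ∑ x, g x * f xᶜ :=
  Fintype.sum_equiv compl_involutive.toPerm _ _ fun x => by simp [mul_comm]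

section IteratedCommutator

variable {A ι κ : Type*} [CommRing A] [DecidableEq ι] [DecidableEq κ]

/-- The iterated commutator `[…[[D, a_{i₁}], a_{i₂}]…, a_{iₘ}]` of an operator `D` with the
multiplication operators by the `a_i`, `i ∈ S = {i₁, …, iₘ}`, evaluated at `b`. The commutators
are expanded into a sum over subsets, so that no ordering of `S` has to be chosen. -/
def iteratedCommutator (D : A → A) (a : ι → A) (S : Finset ι) (b : A) : A :=
  ∑ T ∈ S.powerset, D ((∏ i ∈ T, a i) * b) * ∏ i ∈ S \ T, -a i

@[simp]
lemma iteratedCommutator_empty (D : A → A) (a : ι → A) (b : A) :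
    iteratedCommutator D a ∅ b = D b := by
  simp [iteratedCommutator]

lemma iteratedCommutator_insert (D : A → A) (a : ι → A) {x : ι} {S : Finset ι} (hx : x ∉ S)
    (b : A) :
    iteratedCommutator D a (insert x S) b =
      iteratedCommutator D a S (a x * b) - a x * iteratedCommutator D a S b := by
  unfold iteratedCommutator
  rw [sum_powerset_insert hx, add_comm, sub_eq_add_neg, mul_sum, ← sum_neg_distrib]
  congr 1 <;> refine sum_congr rfl fun T hT => ?_
  all_goals have hxT : x ∉ T := notMem_of_mem_powerset_of_notMem hT hx
  · rw [prod_insert hxT, insert_sdiff_insert, sdiff_insert_of_notMem hx]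
    ring_nf
  · rw [insert_sdiff_of_notMem _ hxT, prod_insert (notMem_sdiff_of_notMem_left hx)]
    ring

lemma iteratedCommutator_map (D : A → A) (e : κ ↪ ι) (a : ι → A) (S : Finset κ) (b : A) :
    iteratedCommutator D a (S.map e) b = iteratedCommutator D (a ∘ e) S b := by
  induction S using Finset.induction_on generalizing b with
  | empty => simp
  | insert x S hx ih =>
    rw [map_insert, iteratedCommutator_insert _ _ (by simpa using hx),
      iteratedCommutator_insert _ _ hx, ih, ih, Function.comp_apply]

lemma iteratedCommutator_restr (D : A → A) (a : ι → A) (S : Finset ι) (b : A) :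
    iteratedCommutator D (restr a S) univ b = iteratedCommutator D a S b := by
  have image_eq :
      (univ.map S.equivFin.symm.toEmbedding).map (Function.Embedding.subtype _) = S := by
    rw [univ_map_equiv_to_embedding, ← attach_eq_univ, attach_map_val]
  conv_rhs => rw [← image_eq, iteratedCommutator_map, iteratedCommutator_map]
  rfl

lemma iteratedCommutator_cons (D : A → A) {n : ℕ} (x : A) (a : Fin n → A) (b : A) :
    iteratedCommutator D (Fin.cons x a : Fin (n + 1) → A) univ b =
      iteratedCommutator D a univ (x * b) - x * iteratedCommutator D a univ b := by
  rw [Fin.univ_succ, cons_eq_insert, iteratedCommutator_insert _ _ (by simp),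
    iteratedCommutator_map, iteratedCommutator_map]
  rfl

variable {F : Type*} [FunLike F A A] [AddMonoidHomClass F A A]

@[simp]
lemma iteratedCommutator_apply_zero (D : F) (a : ι → A) (S : Finset ι) :
    iteratedCommutator D a S 0 = 0 := by
  simp [iteratedCommutator]

lemma iteratedCommutator_apply_sub (D : F) (a : ι → A) (S : Finset ι) (b c : A) :
    iteratedCommutator D a S (b - c) = iteratedCommutator D a S b - iteratedCommutator D a S c := by
  simp [iteratedCommutator, mul_sub, sub_mul]

lemma iteratedCommutator_comp (D : F) (D' : A → A) (a : ι → A) (V : Finset ι) (b : A) :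
    iteratedCommutator (D ∘ D') a V b =
      ∑ S ∈ V.powerset, iteratedCommutator D a (V \ S) (iteratedCommutator D' a S b) := by
  induction V using Finset.induction_on generalizing b with
  | empty => simp
  | insert x V hx ih =>
    rw [sum_powerset_insert hx, iteratedCommutator_insert _ _ hx, ih, ih, mul_sum,
      ← sum_add_distrib, ← sum_sub_distrib]
    refine sum_congr rfl fun S hS => ?_
    have hxS : x ∉ S := notMem_of_mem_powerset_of_notMem hS hx
    rw [insert_sdiff_insert, sdiff_insert_of_notMem hx, insert_sdiff_of_notMem _ hxS,
      iteratedCommutator_insert _ _ (notMem_sdiff_of_notMem_left hx),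
      iteratedCommutator_insert _ _ hxS, iteratedCommutator_apply_sub]
    ring

end IteratedCommutator

section Koszul

variable {A ι : Type*} [CommRing A]

lemma koszul_sub (D D' : A → A) (n : ℕ) (a : Fin n → A) :
    koszul (D - D') n a = koszul D n a - koszul D' n a := by
  simp only [koszul, Pi.sub_apply, sub_mul, smul_sub, sum_sub_distrib]

lemma koszul_sum (s : Finset ι) (D : ι → A → A) (n : ℕ) (a : Fin n → A) :
    koszul (∑ j ∈ s, D j) n a = ∑ j ∈ s, koszul (D j) n a := by
  simp only [koszul, Finset.sum_apply, sum_mul, smul_sum]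
  exact sum_comm

lemma koszul_eq_iteratedCommutator {D : A → A} (hD : D 1 = 0) (n : ℕ) (a : Fin n → A) :
    koszul D n a = iteratedCommutator D a univ 1 := by
  unfold koszul iteratedCommutator
  rw [sum_filter]
  refine sum_congr rfl fun T _ => ?_
  split_ifs with hT
  · rw [prod_neg, ← compl_eq_univ_sdiff, card_compl, Fintype.card_fin, mul_one, zsmul_eq_mul]
    push_cast
    ring
  · rw [not_nonempty_iff_eq_empty.1 hT]
    simp [hD]

lemma koszul_cons {D : A → A} (hD : D 1 = 0) {n : ℕ} (x : A) (a : Fin n → A) :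
    koszul D (n + 1) (Fin.cons x a) =
      iteratedCommutator D a univ x - x * iteratedCommutator D a univ 1 := by
  rw [koszul_eq_iteratedCommutator hD, iteratedCommutator_cons, mul_one]

variable [DecidableEq ι]

lemma koszul_restr_s16 {D : A → A} (hD : D 1 = 0) (a : ι → A) (S : Finset ι) :
    koszul D S.card (restr a S) = iteratedCommutator D a S 1 := by
  rw [koszul_eq_iteratedCommutator hD, iteratedCommutator_restr]

/-- Differential operators of order at most `n` that kill `1`, in Koszul's characterization by the
vanishing of the `(n + 1)`-st bracket. -/
structure HasKoszulOrderLE (D : A → A) (n : ℕ) : Prop where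
  map_one : D 1 = 0
  koszul_eq_zero : ∀ a : Fin (n + 1) → A, koszul D (n + 1) a = 0

namespace HasKoszulOrderLE

variable {D : A → A} {n : ℕ}

lemma iteratedCommutator_eq_mul_of_card_eq (hD : HasKoszulOrderLE D n) (a : ι → A) {S : Finset ι}
    (hS : S.card = n) (b : A) :
    iteratedCommutator D a S b = b * iteratedCommutator D a S 1 := by
  subst hS
  rw [← sub_eq_zero, ← iteratedCommutator_restr D a S b, ← iteratedCommutator_restr D a S 1,
    ← koszul_cons hD.map_one, hD.koszul_eq_zero]

lemma iteratedCommutator_eq_zero (hD : HasKoszulOrderLE D n) (a : ι → A) {S : Finset ι}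
    (hS : n < S.card) (b : A) : iteratedCommutator D a S b = 0 := by
  induction S using Finset.induction_on generalizing b with
  | empty => simp at hS
  | insert x T hx ih =>
    rw [iteratedCommutator_insert _ _ hx]
    obtain hT | hT := (Nat.lt_succ_iff.1 (card_insert_of_notMem hx ▸ hS)).lt_or_eq
    · rw [ih hT, ih hT, mul_zero, sub_zero]
    · rw [hD.iteratedCommutator_eq_mul_of_card_eq a hT.symm (a x * b),
        hD.iteratedCommutator_eq_mul_of_card_eq a hT.symm b]
      ring

lemma iteratedCommutator_eq_mul (hD : HasKoszulOrderLE D n) (a : ι → A) {S : Finset ι}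
    (hS : n ≤ S.card) (b : A) :
    iteratedCommutator D a S b = b * iteratedCommutator D a S 1 := by
  obtain hS | hS := hS.lt_or_eq
  · rw [hD.iteratedCommutator_eq_zero a hS, hD.iteratedCommutator_eq_zero a hS, mul_zero]
  · exact hD.iteratedCommutator_eq_mul_of_card_eq a hS.symm b

end HasKoszulOrderLE

end Koszul

section KoszulInsertion

variable {A ι F : Type*} [CommRing A] [Fintype ι] [DecidableEq ι]
  [FunLike F A A] [AddMonoidHomClass F A A]

/-- The Koszul bracket `K(D)(K(D')((a_s)_{s ∈ S}), (a_j)_{j ∉ S})` obtained by inserting a bracket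
of `D'` into the first slot of a bracket of `D`. -/
noncomputable def koszulInsertion (D D' : A → A) (a : ι → A) (S : Finset ι) : A :=
  koszul D (Sᶜ.card + 1) (Fin.cons (koszul D' S.card (restr a S)) (restr a Sᶜ))

lemma koszulInsertion_eq_iteratedCommutator {D D' : A → A} (hD : D 1 = 0) (hD' : D' 1 = 0)
    (a : ι → A) (S : Finset ι) :
    koszulInsertion D D' a S =
      iteratedCommutator D a Sᶜ (iteratedCommutator D' a S 1) -
        iteratedCommutator D' a S 1 * iteratedCommutator D a Sᶜ 1 := by
  rw [koszulInsertion, koszul_cons hD, koszul_restr_s16 hD', iteratedCommutator_restr,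
    iteratedCommutator_restr]

lemma koszul_comp {D : F} {D' : A → A} (hD : D 1 = 0) (hD' : D' 1 = 0) {n : ℕ}
    (a : Fin n → A) :
    koszul (D ∘ D') n a =
      ∑ S, koszulInsertion D D' a S +
        ∑ S, koszul D' S.card (restr a S) * koszul D Sᶜ.card (restr a Sᶜ) := by
  rw [koszul_eq_iteratedCommutator (by simp [hD']), iteratedCommutator_comp, powerset_univ,
    ← sum_add_distrib]
  refine sum_congr rfl fun S _ => ?_
  rw [koszulInsertion_eq_iteratedCommutator hD hD', koszul_restr_s16 hD, koszul_restr_s16 hD',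
    sub_add_cancel, compl_eq_univ_sdiff]

lemma koszulInsertion_eq_zero_of_le_card_compl {D D' : A → A} {p : ℕ} (hD : HasKoszulOrderLE D p)
    (hD' : D' 1 = 0) (a : ι → A) {S : Finset ι} (hS : p ≤ Sᶜ.card) :
    koszulInsertion D D' a S = 0 := by
  rw [koszulInsertion_eq_iteratedCommutator hD.map_one hD', sub_eq_zero]
  exact hD.iteratedCommutator_eq_mul a hS _

lemma koszulInsertion_eq_zero_of_lt_card {D : F} {D' : A → A} {q : ℕ} (hD : D 1 = 0)
    (hD' : HasKoszulOrderLE D' q) (a : ι → A) {S : Finset ι} (hS : q < S.card) :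
    koszulInsertion D D' a S = 0 := by
  rw [koszulInsertion_eq_iteratedCommutator hD hD'.map_one, hD'.iteratedCommutator_eq_zero a hS,
    iteratedCommutator_apply_zero, zero_mul, sub_zero]

lemma sum_koszulInsertion_eq_sum_card_eq {D : F} {D' : A → A} {p q : ℕ}
    (hD : HasKoszulOrderLE D p) (hD' : HasKoszulOrderLE D' q) (hpq : p + q = Fintype.card ι + 1)
    (a : ι → A) :
    ∑ S, koszulInsertion D D' a S = ∑ S with S.card = q, koszulInsertion D D' a S := by
  refine (sum_filter_of_ne fun S _ hS => ?_).symm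
  by_contra hne
  obtain hlt | hlt := Nat.lt_or_gt_of_ne hne
  · have := card_add_card_compl S
    exact hS (koszulInsertion_eq_zero_of_le_card_compl hD hD'.map_one a (by omega))
  · exact hS (koszulInsertion_eq_zero_of_lt_card hD.map_one hD' a hlt)

end KoszulInsertion

section Graded

variable {A F : Type*} [CommRing A] [FunLike F A A] [AddMonoidHomClass F A A]
  {Δ Δ' : ℕ → F}

lemma sum_range_sum_koszulInsertion (hΔ : ∀ n, HasKoszulOrderLE (Δ n) (n + 1))
    (hΔ' : ∀ n, HasKoszulOrderLE (Δ' n) (n + 1)) {n : ℕ} (a : Fin n → A) :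
    ∑ j ∈ range n, ∑ S, koszulInsertion (Δ j) (Δ' (n - 1 - j)) a S =
      ∑ i ∈ Icc 1 n, ∑ S with S.card = i,
        koszulInsertion (Δ Sᶜ.card) (Δ' (S.card - 1)) a S := by
  refine sum_nbij' (fun j => n - j) (fun i => n - i) ?_ ?_ ?_ ?_ fun j hj => ?_
  any_goals intro j hj; simp only [mem_range, mem_Icc] at hj ⊢; omega
  have hjn : j < n := mem_range.1 hj
  rw [sum_koszulInsertion_eq_sum_card_eq (hΔ j) (hΔ' _) (by rw [Fintype.card_fin]; omega),
    show n - 1 - j + 1 = n - j by omega]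
  refine sum_congr rfl fun S hS => ?_
  have hcard : S.card = n - j := (mem_filter.1 hS).2
  have hcompl : Sᶜ.card = j := by rw [card_compl, Fintype.card_fin]; omega
  rw [hcompl, hcard, Nat.sub_right_comm]

lemma sum_range_sum_koszul_mul_koszul_comm (D D' : ℕ → A → A) {n : ℕ} (a : Fin n → A) :
    ∑ j ∈ range n, ∑ S,
        koszul (D' (n - 1 - j)) S.card (restr a S) * koszul (D j) Sᶜ.card (restr a Sᶜ) =
      ∑ j ∈ range n, ∑ S,
        koszul (D (n - 1 - j)) S.card (restr a S) * koszul (D' j) Sᶜ.card (restr a Sᶜ) := by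
  rw [← sum_range_reflect]
  refine sum_congr rfl fun j hj => ?_
  rw [show n - 1 - (n - 1 - j) = j by have := mem_range.1 hj; omega]
  exact sum_mul_compl_comm (fun S => koszul (D' j) S.card (restr a S))
    fun S => koszul (D (n - 1 - j)) S.card (restr a S)

lemma sum_range_koszul_comp (hΔ : ∀ n, HasKoszulOrderLE (Δ n) (n + 1))
    (hΔ' : ∀ n, HasKoszulOrderLE (Δ' n) (n + 1)) {n : ℕ} (a : Fin n → A) :
    ∑ j ∈ range n, koszul (Δ j ∘ Δ' (n - 1 - j)) n a =
      ∑ i ∈ Icc 1 n, ∑ S with S.card = i,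
          koszulInsertion (Δ Sᶜ.card) (Δ' (S.card - 1)) a S +
        ∑ j ∈ range n, ∑ S,
          koszul (Δ' (n - 1 - j)) S.card (restr a S) * koszul (Δ j) Sᶜ.card (restr a Sᶜ) := by
  simp only [koszul_comp (hΔ _).map_one (hΔ' _).map_one, sum_add_distrib,
    sum_range_sum_koszulInsertion hΔ hΔ']

end Graded

theorem derivedPoisson_commutator_general {K A : Type*} [Semiring K] [CommRing A] [Module K A]
    {Δ Δ' : ℕ → A →ₗ[K] A} (hΔ : ∀ n, HasKoszulOrderLE (Δ n) (n + 1))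
    (hΔ' : ∀ n, HasKoszulOrderLE (Δ' n) (n + 1)) {n : ℕ} (a : Fin n → A) :
    koszul (∑ j ∈ range n, (Δ j ∘ₗ Δ' (n - 1 - j) - Δ' j ∘ₗ Δ (n - 1 - j)) : A →ₗ[K] A) n a =
      ∑ i ∈ Icc 1 n, ∑ S with S.card = i,
        (koszulInsertion (Δ Sᶜ.card) (Δ' (S.card - 1)) a S -
          koszulInsertion (Δ' Sᶜ.card) (Δ (S.card - 1)) a S) := by
  have coe_commutator :
      ⇑(∑ j ∈ range n, (Δ j ∘ₗ Δ' (n - 1 - j) - Δ' j ∘ₗ Δ (n - 1 - j))) =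
        ∑ j ∈ range n, (Δ j ∘ Δ' (n - 1 - j) - Δ' j ∘ Δ (n - 1 - j)) :=
    LinearMap.coe_sum _ _
  have products_cancel :=
    sum_range_sum_koszul_mul_koszul_comm (fun j => ⇑(Δ j)) (fun j => ⇑(Δ' j)) a
  rw [coe_commutator, koszul_sum]
  simp only [koszul_sub, sum_sub_distrib]
  rw [sum_range_koszul_comp hΔ hΔ', sum_range_koszul_comp hΔ' hΔ, products_cancel,
    add_sub_add_right_eq_sub]

/-- for sequences `(Δ_n)`, `(Δ′_n)` of operators killing `1`, with `Δ_n`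
and `Δ′_n` differential operators of order ≤ n+1 (`K(Δ_n)_{n+2} = 0 = K(Δ′_n)_{n+2}`),
and `C_m := Σ_{j=0}^{m} (Δ_j∘Δ′_{m−j} − Δ′_j∘Δ_{m−j})`, one has for `n ≥ 1`:
`K(C_{n−1})_n(a_1,…,a_n) = Σ_{i=1}^{n} Σ_{|S|=i}
  [K(Δ_{n−i})_{n−i+1}(K(Δ′_{i−1})_i((a_s)_{s∈S}),(a_j)_{j∉S})
   − K(Δ′_{n−i})_{n−i+1}(K(Δ_{i−1})_i((a_s)_{s∈S}),(a_j)_{j∉S})]`. -/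
theorem derivedPoisson_commutator (K A : Type*) [Field K] [CharZero K]
    [CommRing A] [Algebra K A]
    (Δ Δ' : ℕ → (A →ₗ[K] A))
    (hΔ1 : ∀ n, Δ n 1 = 0) (hΔ'1 : ∀ n, Δ' n 1 = 0)
    (hΔord : ∀ (n : ℕ) (a : Fin (n + 2) → A), koszul (⇑(Δ n)) (n + 2) a = 0)
    (hΔ'ord : ∀ (n : ℕ) (a : Fin (n + 2) → A), koszul (⇑(Δ' n)) (n + 2) a = 0) :
    ∀ n : ℕ, 1 ≤ n → ∀ a : Fin n → A,
      koszul
          (⇑(∑ j ∈ Finset.range n,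
              (Δ j ∘ₗ Δ' (n - 1 - j) - Δ' j ∘ₗ Δ (n - 1 - j)))) n a =
        ∑ i ∈ Finset.Icc 1 n,
          ∑ S ∈ (Finset.univ : Finset (Fin n)).powerset.filter fun S => S.card = i,
            (koszul (⇑(Δ Sᶜ.card)) (Sᶜ.card + 1)
                (Fin.cons (koszul (⇑(Δ' (S.card - 1))) S.card (restr a S)) (restr a Sᶜ)) -
              koszul (⇑(Δ' Sᶜ.card)) (Sᶜ.card + 1)
                (Fin.cons (koszul (⇑(Δ (S.card - 1))) S.card (restr a S)) (restr a Sᶜ))) := by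
  exact fun n _ a => derivedPoisson_commutator_general
    (fun n => ⟨hΔ1 n, hΔord n⟩) (fun n => ⟨hΔ'1 n, hΔ'ord n⟩) a
end
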